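/- arXiv:2605.05051 — 2 statements merged into one kernel-verified Lean document; each statement's English description precedes it below -/
import Mathlib

section
/- Let ψ_n : D^n → [0,1] be any measurable (possibly randomized) test based on the full data (X_i, Y_i(1), Y_i(0), T_i)_{i=1}^n, which are i.i.d. with law P under P. If sup_{P ∈ P_SI} E_P[ψ_n] ≤ α for some α ∈ (0,1), then sup_{Q ∈ E} E_Q[ψ_n] ≤ α. -/
/-!
STATEMENT 0 (no-free-lunch for conditional independence testing, finite sample):
If a (possibly randomized) test `ψ : D^n → [0,1]` on the full data
`(X, Y(1), Y(0), T)` has level `α` over the strong-ignorability class `P_SI`,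
then it has level `α` over the whole class `E`.
-/

open MeasureTheory ProbabilityTheory Filter

noncomputable section

/-- The full-data sample space `D = ℝ^p × ℝ² × {0,1}`. -/
abbrev FullData (p : ℕ) : Type := (Fin p → ℝ) × ℝ × ℝ × Bool

/-- Covariate coordinate. -/
def Xc {p : ℕ} (ω : FullData p) : Fin p → ℝ := ω.1

/-- Treated potential outcome coordinate `Y(1)`. -/
def Y1c {p : ℕ} (ω : FullData p) : ℝ := ω.2.1

/-- Control potential outcome coordinate `Y(0)`. -/
def Y0c {p : ℕ} (ω : FullData p) : ℝ := ω.2.2.1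

/-- Treatment coordinate `T`. -/
def Tc {p : ℕ} (ω : FullData p) : Bool := ω.2.2.2

lemma measurable_Xc {p : ℕ} : Measurable (Xc (p := p)) := measurable_fst

/-- The σ-algebra generated by the covariates `X`. -/
def mX (p : ℕ) : MeasurableSpace (FullData p) :=
  MeasurableSpace.comap Xc inferInstance

lemma mX_le (p : ℕ) : mX p ≤ (inferInstance : MeasurableSpace (FullData p)) := measurable_Xc.comap_le

/-- The class `E`: distributions of `(X, Y(1), Y(0), T)` such that at least one coordinate
of `X` has a law absolutely continuous w.r.t. Lebesgue measure, and the laws of `Y(1)` and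
`Y(0)` are atomless (continuous). -/
def memE {p : ℕ} (P : ProbabilityMeasure (FullData p)) : Prop :=
  (∃ j : Fin p,
    ((P : Measure (FullData p)).map (fun ω => Xc ω j)).AbsolutelyContinuous
      (volume : Measure ℝ)) ∧
  (∀ y : ℝ, ((P : Measure (FullData p)).map Y1c) {y} = 0) ∧
  (∀ y : ℝ, ((P : Measure (FullData p)).map Y0c) {y} = 0)

/-- The strong-ignorability class `P_SI ⊆ E`: `(Y(1), Y(0)) ⫫ T | X`. -/
def memPSI {p : ℕ} (P : ProbabilityMeasure (FullData p)) : Prop :=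
  memE P ∧
    CondIndepFun (mX p) (mX_le p) (fun ω => (Y1c ω, Y0c ω)) Tc
      (P : Measure (FullData p))

/-- Expected value `E_P[ψ_n]` of a test `ψ_n : D^n → [0,1]` when the `n` data points are
i.i.d. with law `P`, i.e. the integral of `ψ_n` against the `n`-fold product measure. -/
def testExp {p : ℕ} (n : ℕ) (ψ : (Fin n → FullData p) → ℝ)
    (P : ProbabilityMeasure (FullData p)) : ℝ :=
  ∫ x, ψ x ∂(Measure.pi fun _ : Fin n => (P : Measure (FullData p)))

open scoped ENNReal

section PiMeasure

variable {Ω ι : Type*} [MeasurableSpace Ω] [Fintype ι]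

/-- The product of copies of a probability measure with a density has the product density. -/
lemma pi_withDensity (Q : Measure Ω) [IsProbabilityMeasure Q] {f : Ω → ℝ≥0∞} (hf : Measurable f)
    [IsProbabilityMeasure (Q.withDensity f)] :
    Measure.pi (fun _ : ι => Q.withDensity f) =
      (Measure.pi fun _ : ι => Q).withDensity fun x => ∏ i, f (x i) := by
  refine Measure.pi_eq fun s hs => ?_
  rw [withDensity_apply _ (MeasurableSet.univ_pi hs),
    ← lintegral_indicator (MeasurableSet.univ_pi hs)]
  have hind : ∀ x : ι → Ω, (Set.pi Set.univ s).indicator (fun x => ∏ i, f (x i)) x =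
      ∏ i, (s i).indicator f (x i) := by
    intro x
    by_cases hx : x ∈ Set.pi Set.univ s
    · rw [Set.indicator_of_mem hx]
      exact Finset.prod_congr rfl fun i _ => (Set.indicator_of_mem (hx i trivial) f).symm
    · rw [Set.indicator_of_notMem hx]
      obtain ⟨i, hi⟩ : ∃ i, x i ∉ s i := by simpa [Set.mem_pi] using hx
      exact (Finset.prod_eq_zero (Finset.mem_univ i) (Set.indicator_of_notMem hi f)).symm
  have hm : ∀ i, Measurable ((s i).indicator f) := fun i => hf.indicator (hs i)
  simp_rw [hind]
  rw [lintegral_prod_eq_prod_lintegral_of_indepFun Finset.univ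
    (fun i (x : ι → Ω) => (s i).indicator f (x i))
    (iIndepFun_pi (μ := fun _ => Q) fun i => (hm i).aemeasurable)
    (fun i => (hm i).comp (measurable_pi_apply i))]
  refine Finset.prod_congr rfl fun i _ => ?_
  rw [(measurePreserving_eval (fun _ : ι => Q) i).lintegral_comp (hm i),
    lintegral_indicator (hs i), withDensity_apply _ (hs i)]

/-- An i.i.d. sample of an atomless real statistic almost surely has no ties. -/
lemma ae_injective_pi (Q : Measure Ω) [IsProbabilityMeasure Q] {X : Ω → ℝ} (hX : Measurable X)
    (hatom : ∀ a, Q.map X {a} = 0) :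
    ∀ᵐ x ∂(Measure.pi fun _ : ι => Q), Function.Injective fun i => X (x i) := by
  have hprob : IsProbabilityMeasure (Q.map X) := Measure.isProbabilityMeasure_map hX.aemeasurable
  have hne : ∀ i j : ι, i ≠ j → ∀ᵐ x ∂(Measure.pi fun _ : ι => Q), X (x i) ≠ X (x j) := by
    intro i j hij
    have hmeas : ∀ i : ι, Measurable fun x : ι → Ω => X (x i) :=
      fun i => hX.comp (measurable_pi_apply i)
    have hmap : ∀ i : ι, (Measure.pi fun _ : ι => Q).map (fun x => X (x i)) = Q.map X := by
      intro i
      rw [← (measurePreserving_eval (fun _ : ι => Q) i).map_eq,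
        Measure.map_map hX (measurable_pi_apply i)]
      rw [(measurePreserving_eval (fun _ : ι => Q) i).map_eq]
      rfl
    have hind := (iIndepFun_pi (ι := ι) (μ := fun _ => Q) (X := fun _ => X)
      fun _ => hX.aemeasurable).indepFun hij
    rw [indepFun_iff_map_prod_eq_prod_map_map (hmeas i).aemeasurable (hmeas j).aemeasurable,
      hmap, hmap] at hind
    have hdiag : ∀ᵐ z ∂((Q.map X).prod (Q.map X)), z.1 ≠ z.2 := by
      refine (Measure.ae_prod_iff_ae_ae
        (measurableSet_eq_fun measurable_fst measurable_snd).compl).2 (Eventually.of_forall ?_)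
      intro a
      rw [ae_iff]
      convert hatom a using 2
      ext b
      simp [eq_comm]
    rw [← hind] at hdiag
    exact ae_of_ae_map ((hmeas i).prodMk (hmeas j)).aemeasurable hdiag
  have hall : ∀ᵐ x ∂(Measure.pi fun _ : ι => Q), ∀ i j : ι, i ≠ j → X (x i) ≠ X (x j) := by
    simp only [ae_all_iff]
    exact hne
  filter_upwards [hall] with x hx i j hij
  by_contra h
  exact hx i j h hij

end PiMeasure

section Coloring

variable {Ω K : Type*} [MeasurableSpace Ω]

/-- Averaging over independent random colors `c k` with probabilities `q k`, the inverse
probability weights of finitely many observations in distinct cells have mean one. -/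
lemma sum_prod_mul_prod_inv_eq_one [Fintype K] [DecidableEq K] {n : ℕ} (q : K → Bool → ℝ≥0∞) (hq : ∀ k, ∑ b, q k b = 1)
    (k : Fin n → K) (hk : Function.Injective k) (b : Fin n → Bool)
    (hb : ∀ i, q (k i) (b i) ≠ 0) :
    ∑ c : K → Bool, (∏ l, q l (c l)) *
      ∏ i, (if b i = c (k i) then (q (k i) (b i))⁻¹ else 0) = 1 := by
  have htop : ∀ l d, q l d ≠ ∞ := fun l d =>
    ne_top_of_le_ne_top ENNReal.one_ne_top
      ((Finset.single_le_sum (f := q l) (fun _ _ => zero_le) (Finset.mem_univ d)).trans_eq (hq l))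
  have hfib : ∀ c : K → Bool, ∏ i, (if b i = c (k i) then (q (k i) (b i))⁻¹ else 0) =
      ∏ l, ∏ i with k i = l, (if b i = c l then (q l (b i))⁻¹ else 0) := by
    intro c
    rw [← Finset.prod_fiberwise Finset.univ k]
    refine Finset.prod_congr rfl fun l _ => Finset.prod_congr rfl fun i hi => ?_
    rw [(Finset.mem_filter.1 hi).2]
  simp_rw [hfib, ← Finset.prod_mul_distrib]
  rw [← Fintype.prod_sum
    (fun l d => q l d * ∏ i with k i = l, (if b i = d then (q l (b i))⁻¹ else 0))]
  refine Finset.prod_eq_one fun l _ => ?_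
  by_cases hl : ∃ i, k i = l
  · obtain ⟨i, rfl⟩ := hl
    have hs : Finset.univ.filter (fun j => k j = k i) = {i} := by
      ext j
      simp [hk.eq_iff]
    simp only [hs, Finset.prod_singleton, mul_ite, mul_zero, Finset.sum_ite_eq, Finset.mem_univ,
      if_true]
    exact ENNReal.mul_inv_cancel (hb i) (htop _ _)
  · have hs : Finset.univ.filter (fun j => k j = l) = ∅ := by
      ext j
      simpa using fun h => hl ⟨j, h⟩
    simpa [hs] using hq l

/-- The conditional probability `Q(t = b | κ = k)`, with a fixed choice on null cells. -/
def cellProb (Q : Measure Ω) (κ : Ω → K) (t : Ω → Bool) (k : K) (b : Bool) : ℝ≥0∞ :=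
  if Q (κ ⁻¹' {k}) = 0 then (if b then 1 else 0)
  else Q (κ ⁻¹' {k} ∩ t ⁻¹' {b}) / Q (κ ⁻¹' {k})

/-- The density, with respect to `Q`, of the law in which the cell `k` of `κ` keeps its mass but
is conditioned on `t = c k`. -/
def colorDensity (Q : Measure Ω) (κ : Ω → K) (t : Ω → Bool) (c : K → Bool) (ω : Ω) : ℝ≥0∞ :=
  if t ω = c (κ ω) then (cellProb Q κ t (κ ω) (t ω))⁻¹ else 0

lemma sum_cellProb (Q : Measure Ω) [IsProbabilityMeasure Q] (κ : Ω → K) {t : Ω → Bool}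
    (ht : Measurable t) (k : K) : ∑ b, cellProb Q κ t k b = 1 := by
  by_cases h : Q (κ ⁻¹' {k}) = 0
  · simp [cellProb, h]
  · have hadd : Q (κ ⁻¹' {k} ∩ t ⁻¹' {true}) + Q (κ ⁻¹' {k} ∩ t ⁻¹' {false}) =
        Q (κ ⁻¹' {k}) := by
      rw [← measure_inter_add_sdiff (κ ⁻¹' {k}) (ht (measurableSet_singleton true))]
      congr 2
      ext ω
      simp
    simp only [cellProb, h, if_false, Fintype.sum_bool]
    rw [← ENNReal.add_div, hadd, ENNReal.div_self h (measure_ne_top _ _)]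

lemma ae_cellProb_ne_zero [Finite K] (Q : Measure Ω) [IsProbabilityMeasure Q]
    (κ : Ω → K) (t : Ω → Bool) :
    ∀ᵐ ω ∂Q, cellProb Q κ t (κ ω) (t ω) ≠ 0 := by
  have hall : ∀ᵐ ω ∂Q, ∀ k b, cellProb Q κ t k b = 0 → ¬ (κ ω = k ∧ t ω = b) := by
    cases nonempty_fintype K
    simp only [ae_all_iff]
    intro k b h
    have hnull : Q (κ ⁻¹' {k} ∩ t ⁻¹' {b}) = 0 := by
      by_cases hk : Q (κ ⁻¹' {k}) = 0
      · exact measure_mono_null Set.inter_subset_left hk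
      · simpa [cellProb, hk, ENNReal.div_eq_zero_iff] using h
    exact measure_eq_zero_iff_ae_notMem.1 hnull
  filter_upwards [hall] with ω hω h
  exact hω _ _ h ⟨rfl, rfl⟩

lemma measurable_colorDensity [Finite K] [MeasurableSpace K] [MeasurableSingletonClass K]
    (Q : Measure Ω) {κ : Ω → K} (hκ : Measurable κ) {t : Ω → Bool} (ht : Measurable t)
    (c : K → Bool) : Measurable (colorDensity Q κ t c) := by
  have : colorDensity Q κ t c = (fun z : K × Bool =>
      if z.2 = c z.1 then (cellProb Q κ t z.1 z.2)⁻¹ else 0) ∘ fun ω => (κ ω, t ω) := rfl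
  rw [this]
  exact (measurable_of_finite _).comp (hκ.prodMk ht)

lemma isProbabilityMeasure_withDensity_colorDensity [Fintype K] [MeasurableSpace K]
    [MeasurableSingletonClass K] (Q : Measure Ω) [IsProbabilityMeasure Q]
    {κ : Ω → K} (hκ : Measurable κ) {t : Ω → Bool} (ht : Measurable t)
    (c : K → Bool) (hc : ∀ k, cellProb Q κ t k (c k) ≠ 0) :
    IsProbabilityMeasure (Q.withDensity (colorDensity Q κ t c)) := by
  classical
  refine ⟨?_⟩
  have hms : ∀ k, MeasurableSet (κ ⁻¹' {k} ∩ t ⁻¹' {c k}) := fun k =>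
    (hκ (measurableSet_singleton k)).inter (ht (measurableSet_singleton (c k)))
  have hsum : ∀ ω, colorDensity Q κ t c ω = ∑ k,
      (κ ⁻¹' {k} ∩ t ⁻¹' {c k}).indicator (fun _ => (cellProb Q κ t k (c k))⁻¹) ω := by
    intro ω
    rw [Finset.sum_eq_single (κ ω)]
    · by_cases h : t ω = c (κ ω) <;> simp [colorDensity, Set.indicator, h]
    · intro k _ hk
      exact Set.indicator_of_notMem (fun h => hk h.1.symm) _
    · simp
  have hcell : ∀ k, (cellProb Q κ t k (c k))⁻¹ * Q (κ ⁻¹' {k} ∩ t ⁻¹' {c k}) =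
      Q (κ ⁻¹' {k}) := by
    intro k
    by_cases h : Q (κ ⁻¹' {k}) = 0
    · rw [h, measure_mono_null Set.inter_subset_left h, mul_zero]
    · have hk := hc k
      simp only [cellProb, h, if_false] at hk ⊢
      have hne : Q (κ ⁻¹' {k} ∩ t ⁻¹' {c k}) ≠ 0 := fun h0 => hk (by rw [h0, ENNReal.zero_div])
      rw [ENNReal.inv_div (Or.inl (measure_ne_top _ _)) (Or.inl h),
        ENNReal.div_mul_cancel hne (measure_ne_top _ _)]
  rw [withDensity_apply _ MeasurableSet.univ, Measure.restrict_univ]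
  simp_rw [hsum]
  rw [lintegral_finsetSum _ fun k _ => measurable_const.indicator (hms k)]
  simp_rw [lintegral_indicator_const (hms _), hcell]
  rw [← measure_univ (μ := Q), sum_measure_preimage_singleton _
    fun k _ => hκ (measurableSet_singleton k)]
  simp

/-- If a test has expectation at most `a` under every randomly colored law, its expectation
under `Q` exceeds `a` by at most the probability that two observations share a cell. -/
lemma lintegral_pi_le_add_measure_collision [Fintype K] [MeasurableSpace K]
    [MeasurableSingletonClass K] (Q : Measure Ω) [IsProbabilityMeasure Q]
    {κ : Ω → K} (hκ : Measurable κ) {t : Ω → Bool} (ht : Measurable t) {n : ℕ}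
    {ψ : (Fin n → Ω) → ℝ≥0∞} (hψ : Measurable ψ) (hψ_le : ∀ x, ψ x ≤ 1) (a : ℝ≥0∞)
    (h : ∀ c : K → Bool, IsProbabilityMeasure (Q.withDensity (colorDensity Q κ t c)) →
      ∫⁻ x, ψ x ∂(Measure.pi fun _ => Q.withDensity (colorDensity Q κ t c)) ≤ a) :
    ∫⁻ x, ψ x ∂(Measure.pi fun _ => Q) ≤
      a + (Measure.pi fun _ : Fin n => Q) {x | ¬ Function.Injective fun i => κ (x i)} := by
  classical
  set μ := Measure.pi fun _ : Fin n => Q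
  let w : (K → Bool) → ℝ≥0∞ := fun c => ∏ k, cellProb Q κ t k (c k)
  let F : (K → Bool) → (Fin n → Ω) → ℝ≥0∞ := fun c x => ∏ i, colorDensity Q κ t c (x i)
  have hF : ∀ c, Measurable (F c) := fun c => Finset.measurable_prod _ fun i _ =>
    (measurable_colorDensity Q hκ ht c).comp (measurable_pi_apply i)
  have hwsum : ∑ c, w c = 1 := by
    rw [← Fintype.prod_sum (fun k b => cellProb Q κ t k b)]
    exact Finset.prod_eq_one fun k _ => sum_cellProb Q κ ht k
  have hcoll : MeasurableSet {x : Fin n → Ω | ¬ Function.Injective fun i => κ (x i)} := by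
    have hm : Measurable fun x : Fin n → Ω => fun i => κ (x i) :=
      measurable_pi_lambda _ fun i => hκ.comp (measurable_pi_apply i)
    exact hm (Set.toFinite {y : Fin n → K | ¬ Function.Injective y}).measurableSet
  have hpos : ∀ᵐ x ∂μ, ∀ i, cellProb Q κ t (κ (x i)) (t (x i)) ≠ 0 := by
    rw [ae_all_iff]
    exact fun i => (measurePreserving_eval (fun _ : Fin n => Q) i).quasiMeasurePreserving.ae
      (ae_cellProb_ne_zero Q κ t)
  have hbound : ∀ᵐ x ∂μ, ψ x ≤ (∑ c, w c * (F c x * ψ x)) +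
      {x : Fin n → Ω | ¬ Function.Injective fun i => κ (x i)}.indicator 1 x := by
    filter_upwards [hpos] with x hx
    by_cases hinj : Function.Injective fun i => κ (x i)
    · have hone : ∑ c, w c * F c x = 1 := sum_prod_mul_prod_inv_eq_one (cellProb Q κ t)
        (sum_cellProb Q κ ht) (fun i => κ (x i)) hinj (fun i => t (x i)) hx
      simp_rw [← mul_assoc]
      rw [← Finset.sum_mul, hone, one_mul]
      exact le_self_add
    · rw [Set.indicator_of_mem (show x ∈ {x | ¬ Function.Injective fun i => κ (x i)} from hinj)]
      exact (hψ_le x).trans le_add_self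
  have hFψ : ∀ c, Measurable fun x => F c x * ψ x := fun c => (hF c).mul hψ
  have hterm : ∀ c, w c * ∫⁻ x, F c x * ψ x ∂μ ≤ w c * a := by
    intro c
    by_cases hw : w c = 0
    · simp [hw]
    · have hP := isProbabilityMeasure_withDensity_colorDensity Q hκ ht c
        fun k => Finset.prod_ne_zero_iff.1 hw k (Finset.mem_univ k)
      have hle := h c hP
      rw [pi_withDensity Q (measurable_colorDensity Q hκ ht c),
        lintegral_withDensity_eq_lintegral_mul _ (hF c) hψ] at hle
      exact mul_le_mul_right hle _
  calc ∫⁻ x, ψ x ∂μ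
      ≤ ∫⁻ x, (∑ c, w c * (F c x * ψ x)) +
          {x : Fin n → Ω | ¬ Function.Injective fun i => κ (x i)}.indicator 1 x ∂μ :=
        lintegral_mono_ae hbound
    _ = (∑ c, w c * ∫⁻ x, F c x * ψ x ∂μ) +
          μ {x : Fin n → Ω | ¬ Function.Injective fun i => κ (x i)} := by
        rw [lintegral_add_right _ (measurable_one.indicator hcoll), lintegral_indicator_one hcoll,
          lintegral_finsetSum _ fun c _ => (hFψ c).const_mul _]
        simp_rw [lintegral_const_mul _ (hFψ _)]
    _ ≤ (∑ c, w c * a) + μ {x : Fin n → Ω | ¬ Function.Injective fun i => κ (x i)} := by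
        exact add_le_add_left (Finset.sum_le_sum fun c _ => hterm c) _
    _ = _ := by rw [← Finset.sum_mul, hwsum, one_mul]

lemma ae_eq_color [Finite K] [MeasurableSpace K] [MeasurableSingletonClass K] (Q : Measure Ω)
    {κ : Ω → K} (hκ : Measurable κ) {t : Ω → Bool} (ht : Measurable t) (c : K → Bool) :
    ∀ᵐ ω ∂(Q.withDensity (colorDensity Q κ t c)), t ω = c (κ ω) := by
  rw [ae_withDensity_iff (measurable_colorDensity Q hκ ht c)]
  refine Eventually.of_forall fun ω hω => ?_
  by_contra hne
  exact hω (if_neg hne)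

end Coloring

section Approximation

/-- Finer and finer finite partitions of the line eventually separate an i.i.d. sample of an
atomless real statistic. -/
lemma tendsto_measure_collision {Ω ι : Type*} [MeasurableSpace Ω] [Fintype ι] (Q : Measure Ω)
    [IsProbabilityMeasure Q] {X : Ω → ℝ} (hX : Measurable X) (hatom : ∀ a, Q.map X {a} = 0)
    (s : ℕ → SimpleFunc ℝ ℝ) (hs : ∀ a, Tendsto (fun m => s m a) atTop (nhds a)) :
    Tendsto (fun m => (Measure.pi fun _ : ι => Q)
      {x | ¬ Function.Injective fun i => s m (X (x i))}) atTop (nhds 0) := by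
  rw [← measure_empty (μ := Measure.pi fun _ : ι => Q)]
  refine tendsto_measure_of_ae_tendsto_indicator_of_isFiniteMeasure atTop MeasurableSet.empty
    (fun m => ?_) ?_
  · have heq : {x : ι → Ω | ¬ Function.Injective fun i => s m (X (x i))} =
        ⋃ i, ⋃ j, ⋃ _ : i ≠ j, {x | s m (X (x i)) = s m (X (x j))} := by
      ext x
      simp only [Function.Injective, Set.mem_ofPred_eq, Set.mem_iUnion]
      push Not
      exact exists_congr fun i => exists_congr fun j =>
        ⟨fun h => ⟨h.2, h.1⟩, fun ⟨h, h'⟩ => ⟨h', h⟩⟩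
    have hm : ∀ i : ι, Measurable fun x : ι → Ω => s m (X (x i)) :=
      fun i => (s m).measurable.comp (hX.comp (measurable_pi_apply i))
    rw [heq]
    exact MeasurableSet.iUnion fun i => MeasurableSet.iUnion fun j =>
      MeasurableSet.iUnion fun _ => measurableSet_eq_fun (hm i) (hm j)
  · filter_upwards [ae_injective_pi (ι := ι) Q hX hatom] with x hx
    have hsep : ∀ i j, ∀ᶠ m in atTop, i ≠ j → s m (X (x i)) ≠ s m (X (x j)) := by
      intro i j
      by_cases hij : i = j
      · simp [hij]
      · filter_upwards [((hs (X (x i))).prodMk_nhds (hs (X (x j)))).eventually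
          (isClosed_diagonal.isOpen_compl.mem_nhds fun h => hij (hx h))] with m hm _
        exact hm
    filter_upwards [eventually_all.2 fun i => eventually_all.2 (hsep i)] with m hm
    simp only [Set.mem_empty_iff_false, iff_false, not_not]
    intro i j hij
    by_contra h
    exact hm i j h hij

end Approximation

section Ignorability

variable {p : ℕ}

lemma measurable_Y1c : Measurable (Y1c (p := p)) := measurable_snd.fst

lemma measurable_Y0c : Measurable (Y0c (p := p)) := measurable_snd.snd.fst

lemma measurable_Tc : Measurable (Tc (p := p)) := measurable_snd.snd.snd

/-- A treatment that is almost surely a function of the covariates is strongly ignorable. -/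
lemma condIndepFun_of_ae_eq_comp (P : Measure (FullData p)) [IsFiniteMeasure P]
    {g : (Fin p → ℝ) → Bool} (hg : Measurable g) (h : ∀ᵐ ω ∂P, Tc ω = g (Xc ω)) :
    CondIndepFun (mX p) (mX_le p) (fun ω => (Y1c ω, Y0c ω)) Tc P := by
  have hY : Measurable fun ω : FullData p => (Y1c ω, Y0c ω) :=
    measurable_Y1c.prodMk measurable_Y0c
  have hgX : Measurable[mX p] fun ω : FullData p => g (Xc ω) :=
    hg.comp (comap_measurable Xc)
  have hind := condIndepFun_of_measurable_right (hm' := mX_le p) (μ := P) hY hgX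
  refine Kernel.IndepFun.congr' hind (Eventually.of_forall fun _ => ae_eq_refl _) ?_
  refine Measure.ae_ae_of_ae_comp ?_
  rw [condExpKernel_comp_trim]
  filter_upwards [h] with ω hω
  exact hω.symm

lemma memE_of_absolutelyContinuous {P Q : ProbabilityMeasure (FullData p)}
    (hPQ : (P : Measure (FullData p)) ≪ Q) (hQ : memE Q) : memE P := by
  obtain ⟨⟨j, hj⟩, h1, h0⟩ := hQ
  exact ⟨⟨j, (hPQ.map ((measurable_pi_apply j).comp measurable_Xc)).trans hj⟩,
    fun y => hPQ.map measurable_Y1c (h1 y), fun y => hPQ.map measurable_Y0c (h0 y)⟩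

lemma testExp_le_iff {n : ℕ} {ψ : (Fin n → FullData p) → ℝ} (hψ_meas : Measurable ψ)
    (hψ_range : ∀ x, ψ x ∈ Set.Icc (0 : ℝ) 1) {α : ℝ} (hα : 0 ≤ α)
    (P : ProbabilityMeasure (FullData p)) :
    testExp n ψ P ≤ α ↔
      ∫⁻ x, ENNReal.ofReal (ψ x) ∂(Measure.pi fun _ => (P : Measure (FullData p))) ≤
        ENNReal.ofReal α := by
  have hint : Integrable ψ (Measure.pi fun _ : Fin n => (P : Measure (FullData p))) :=
    Integrable.of_mem_Icc 0 1 hψ_meas.aemeasurable (Eventually.of_forall hψ_range)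
  rw [← ofReal_integral_eq_lintegral_ofReal hint (Eventually.of_forall fun x => (hψ_range x).1),
    ENNReal.ofReal_le_ofReal_iff hα]
  rfl

end Ignorability

/-- If a measurable randomized test `ψ_n : D^n → [0,1]` satisfies
`sup_{P ∈ P_SI} E_P[ψ_n] ≤ α` for some `α ∈ (0,1)`, then `sup_{Q ∈ E} E_Q[ψ_n] ≤ α`. -/
theorem no_free_lunch_finite_sample {p : ℕ} (n : ℕ)
    (ψ : (Fin n → FullData p) → ℝ) (hψ_meas : Measurable ψ)
    (hψ_range : ∀ x, ψ x ∈ Set.Icc (0 : ℝ) 1)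
    (α : ℝ) (hα : α ∈ Set.Ioo (0 : ℝ) 1)
    (hlevel : ∀ P : ProbabilityMeasure (FullData p), memPSI P → testExp n ψ P ≤ α) :
    ∀ Q : ProbabilityMeasure (FullData p), memE Q → testExp n ψ Q ≤ α := by
  intro Q hQ
  obtain ⟨j, hj⟩ := hQ.1
  set μ : Measure (FullData p) := (Q : Measure (FullData p))
  have hXj : Measurable fun ω : FullData p => Xc ω j := (measurable_pi_apply j).comp measurable_Xc
  let s : ℕ → SimpleFunc ℝ ℝ := SimpleFunc.approxOn id measurable_id Set.univ 0 (Set.mem_univ 0)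
  have hs : ∀ a, Tendsto (fun m => s m a) atTop (nhds a) := fun a =>
    SimpleFunc.tendsto_approxOn measurable_id (Set.mem_univ 0) (by simp)
  have hlim := tendsto_measure_collision (ι := Fin n) μ hXj
    (fun a => hj (measure_singleton a)) s hs
  rw [testExp_le_iff hψ_meas hψ_range hα.1.le]
  refine ge_of_tendsto' (by simpa using hlim.const_add (ENNReal.ofReal α)) fun m => ?_
  let κ' : (Fin p → ℝ) → (s m).range := fun x => ⟨s m (x j), (s m).mem_range_self _⟩
  have hκ' : Measurable κ' := ((s m).measurable.comp (measurable_pi_apply j)).subtype_mk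
  have hκ : Measurable fun ω : FullData p => κ' (Xc ω) := hκ'.comp measurable_Xc
  have hbound := lintegral_pi_le_add_measure_collision μ hκ measurable_Tc hψ_meas.ennreal_ofReal
    (fun x => ENNReal.ofReal_le_one.2 (hψ_range x).2) (ENNReal.ofReal α) fun c hP => ?_
  · simpa [Function.Injective, κ'] using hbound
  · let P : ProbabilityMeasure (FullData p) := ⟨_, hP⟩
    have hP_SI : memPSI P :=
      ⟨memE_of_absolutelyContinuous (withDensity_absolutelyContinuous _ _) hQ,
        condIndepFun_of_ae_eq_comp _ ((measurable_of_finite c).comp hκ')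
          (ae_eq_color μ hκ measurable_Tc c)⟩
    exact (testExp_le_iff hψ_meas hψ_range hα.1.le P).1 (hlevel P hP_SI)

end
end

section
/- Suppose a sequence of prediction sets {Ĉ_{n,α}}_{n≥1} satisfies limsup_{n→∞} sup_{P ∈ P_SI} P_P(Δ ∉ Ĉ_{n,α}(X)) ≤ α for some α ∈ (0,1). Then for every P ∈ P_SI and every y ∈ ℝ, limsup_{n→∞} P_P(y ∉ Ĉ_{n,α}(X)) ≤ α; consequently, for every P ∈ P_SI, lim_{n→∞} E_P[length(Ĉ_{n,α}(X))] = ∞. -/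
/-!
STATEMENT 0 (no-free-lunch for conditional independence testing, finite sample):
If a (possibly randomized) test `ψ : D^n → [0,1]` on the full data
`(X, Y(1), Y(0), T)` has level `α` over the strong-ignorability class `P_SI`,
then it has level `α` over the whole class `E`.
-/

open MeasureTheory ProbabilityTheory Filter

noncomputable section

/-- The observed-data sample space: one observed unit is `(X, T, Y)`. -/
abbrev Obs (p : ℕ) : Type := (Fin p → ℝ) × Bool × ℝ

/-- The observed data of a unit: `(X, T, Y)` with `Y = T·Y(1) + (1 - T)·Y(0)`. -/
def obs {p : ℕ} (ω : FullData p) : Obs p :=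
  (ω.1, ω.2.2.2, if ω.2.2.2 then ω.2.1 else ω.2.2.1)

/-- Joint law of `n + 1` i.i.d. full-data observations from `P`
(the first `n` units are the study sample, the last one is the test unit). -/
def jointLaw {p : ℕ} (n : ℕ) (P : ProbabilityMeasure (FullData p)) :
    Measure (Fin (n + 1) → FullData p) :=
  Measure.pi fun _ : Fin (n + 1) => (P : Measure (FullData p))

/-- The observed data `O_n` extracted from `n + 1` full-data points. -/
def obsData {p : ℕ} (n : ℕ) (ω : Fin (n + 1) → FullData p) : Fin n → Obs p :=
  fun i => obs (ω i.castSucc)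

/-- Covariates `X` of the test unit. -/
def testX {p : ℕ} (n : ℕ) (ω : Fin (n + 1) → FullData p) : Fin p → ℝ :=
  Xc (ω (Fin.last n))

/-- Individual treatment effect `Δ = Y(1) - Y(0)` of the test unit. -/
def testITE {p : ℕ} (n : ℕ) (ω : Fin (n + 1) → FullData p) : ℝ :=
  Y1c (ω (Fin.last n)) - Y0c (ω (Fin.last n))


open scoped ENNReal

/-- If the treatment is almost surely a measurable function of the covariates, then strong
ignorability holds. -/
lemma condIndepFun_of_treatment_ae_eq {p : ℕ} (μ : Measure (FullData p)) [IsProbabilityMeasure μ]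
    {h : (Fin p → ℝ) → Bool} (hh : Measurable h) (hT : ∀ᵐ ω ∂μ, Tc ω = h (Xc ω)) :
    CondIndepFun (mX p) (mX_le p) (fun ω => (Y1c ω, Y0c ω)) Tc μ := by
  have hX : Measurable[mX p] (fun ω : FullData p => h (Xc ω)) :=
    hh.comp (comap_measurable Xc)
  have hY : Measurable (fun ω : FullData p => (Y1c ω, Y0c ω)) := by
    unfold Y1c Y0c; fun_prop
  have hind : CondIndepFun (mX p) (mX_le p) (fun ω => (Y1c ω, Y0c ω)) (fun ω => h (Xc ω)) μ :=
    condIndepFun_of_measurable_right hY hX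
  refine Kernel.IndepFun.congr' hind (ae_of_all _ fun _ => ae_eq_refl _) ?_
  refine Measure.ae_ae_of_ae_comp ?_
  rw [condExpKernel_comp_trim]
  filter_upwards [hT] with ω hω using hω.symm

/-- Averaging over all labellings `g` of the cells: if the cells `c i` are pairwise distinct, then
a fraction `2 ^ (-|ι|)` of the labellings agree with the prescribed labels `t`. -/
lemma sum_prod_ite_eq_of_injective {ι κ : Type*} [Fintype ι] [Fintype κ] [DecidableEq κ]
    {c : ι → κ} (hc : Function.Injective c) (t : ι → Bool) :
    ∑ g : κ → Bool, ∏ i, (if t i = g (c i) then (2 : ℝ≥0∞) else 0) =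
      2 ^ Fintype.card κ := by
  classical
  have hprod (g : κ → Bool) : ∏ i, (if t i = g (c i) then (2 : ℝ≥0∞) else 0) =
      ∏ k, ∏ i, (if c i = k then (if t i = g k then (2 : ℝ≥0∞) else 0) else 1) := by
    rw [Finset.prod_comm]
    simp
  have hcell (k : κ) : ∑ b : Bool,
      ∏ i, (if c i = k then (if t i = b then (2 : ℝ≥0∞) else 0) else 1) = 2 := by
    by_cases hk : ∃ i, c i = k
    · obtain ⟨i, rfl⟩ := hk
      simp only [hc.eq_iff, Finset.prod_ite_eq', Finset.mem_univ, if_true]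
      cases t i <;> simp
    · push Not at hk
      simp [hk, one_add_one_eq_two]
  simp_rw [hprod]
  have := Finset.prod_univ_sum (fun _ : κ => (Finset.univ : Finset Bool))
    (fun k b => ∏ i, (if c i = k then (if t i = b then (2 : ℝ≥0∞) else 0) else 1))
  rw [Fintype.piFinset_univ] at this
  rw [← this]
  simp only [hcell, Finset.prod_const, Finset.card_univ]

lemma sum_prod_ite_le {ι κ : Type*} [Fintype ι] [Fintype κ] [DecidableEq κ]
    (c : ι → κ) (t : ι → Bool) :
    ∑ g : κ → Bool, ∏ i, (if t i = g (c i) then (2 : ℝ≥0∞) else 0) ≤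
      2 ^ Fintype.card κ * 2 ^ Fintype.card ι := by
  calc ∑ g : κ → Bool, ∏ i, (if t i = g (c i) then (2 : ℝ≥0∞) else 0)
      ≤ ∑ _g : κ → Bool, ∏ _i : ι, (2 : ℝ≥0∞) := by
        gcongr
        split_ifs <;> simp
    _ = _ := by simp

/-- Conditioning each factor of a product measure is conditioning on a product set. -/
lemma pi_cond_mul {ι Ω : Type*} [Fintype ι] [MeasurableSpace Ω] (μ : Measure Ω)
    [IsProbabilityMeasure μ] {S : Set Ω} (hS : MeasurableSet S) (hS0 : μ S ≠ 0)
    {A : Set (ι → Ω)} (hA : MeasurableSet A) :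
    Measure.pi (fun _ : ι => μ) (A ∩ Set.univ.pi fun _ => S) =
      Measure.pi (fun _ : ι => μ[|S]) A * Measure.pi (fun _ : ι => μ) (Set.univ.pi fun _ => S) := by
  have : IsProbabilityMeasure μ[|S] := cond_isProbabilityMeasure hS0
  have key : (Measure.pi (fun _ : ι => μ)).restrict (Set.univ.pi fun _ => S) =
      (∏ _i : ι, μ S) • Measure.pi (fun _ : ι => μ[|S]) := by
    rw [Measure.restrict_pi_pi]
    refine Measure.pi_eq fun s hs => ?_
    simp only [Measure.smul_apply, Measure.pi_pi, smul_eq_mul]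
    rw [← Finset.prod_mul_distrib]
    refine Finset.prod_congr rfl fun i _ => ?_
    rw [mul_comm, cond_mul_eq_inter hS, Measure.restrict_apply (hs i), Set.inter_comm]
  rw [← Measure.restrict_apply hA, key, Measure.smul_apply, Measure.pi_pi, smul_eq_mul, mul_comm]

lemma memE.of_absolutelyContinuous {p : ℕ} {P Q : ProbabilityMeasure (FullData p)}
    (hQ : memE Q) (h : (P : Measure (FullData p)) ≪ (Q : Measure (FullData p))) : memE P := by
  obtain ⟨⟨j, hj⟩, h1, h0⟩ := hQ
  have hm1 : Measurable (Y1c (p := p)) := by unfold Y1c; fun_prop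
  have hm0 : Measurable (Y0c (p := p)) := by unfold Y0c; fun_prop
  have hmj : Measurable (fun ω : FullData p => Xc ω j) := by unfold Xc; fun_prop
  exact ⟨⟨j, (h.map hmj).trans hj⟩, fun y => h.map hm1 (h1 y), fun y => h.map hm0 (h0 y)⟩

/-- Averaging over treatment assignments that are deterministic on each cell `c`. -/
lemma lintegral_sum_labellings_le {p : ℕ} {ι κ : Type*} [Fintype ι] [Nonempty ι] [Fintype κ]
    [DecidableEq κ] [MeasurableSpace κ] [DiscreteMeasurableSpace κ]
    {Q : ProbabilityMeasure (FullData p)} (hQ : memE Q) {c : (Fin p → ℝ) → κ} (hc : Measurable c)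
    {A : Set (ι → FullData p)} (hA : MeasurableSet A) {s : ℝ≥0∞}
    (hs : ∀ P : ProbabilityMeasure (FullData p), memPSI P →
      Measure.pi (fun _ : ι => (P : Measure (FullData p))) A ≤ s) :
    ∫⁻ ω in A, ∑ g : κ → Bool, ∏ i, (if Tc (ω i) = g (c (Xc (ω i))) then (2 : ℝ≥0∞) else 0)
        ∂Measure.pi (fun _ : ι => (Q : Measure (FullData p))) ≤
      s * ∫⁻ ω, ∑ g : κ → Bool, ∏ i, (if Tc (ω i) = g (c (Xc (ω i))) then (2 : ℝ≥0∞) else 0)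
        ∂Measure.pi (fun _ : ι => (Q : Measure (FullData p))) := by
  let S (g : κ → Bool) : Set (FullData p) := {ω | Tc ω = g (c (Xc ω))}
  have hTc : Measurable (Tc (p := p)) := by unfold Tc; fun_prop
  have hgc (g : κ → Bool) : Measurable fun x => g (c x) := (measurable_of_countable g).comp hc
  have hS (g : κ → Bool) : MeasurableSet (S g) :=
    measurableSet_eq_fun hTc ((hgc g).comp measurable_Xc)
  have hpi (g : κ → Bool) : MeasurableSet (Set.univ.pi fun _ : ι => S g) :=
    MeasurableSet.univ_pi fun _ => hS g
  have hw (g : κ → Bool) : (fun ω : ι → FullData p =>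
      ∏ i, (if Tc (ω i) = g (c (Xc (ω i))) then (2 : ℝ≥0∞) else 0)) =
      (Set.univ.pi fun _ => S g).indicator fun _ => 2 ^ Fintype.card ι := by
    classical
    ext ω
    rw [Set.indicator_apply]
    split_ifs with h
    · refine (Finset.prod_congr rfl fun i _ => if_pos (h i trivial)).trans ?_
      simp
    · simp only [Set.mem_univ_pi, not_forall] at h
      obtain ⟨i, hi⟩ := h
      exact Finset.prod_eq_zero (Finset.mem_univ i) (if_neg hi)
  have hwm (g : κ → Bool) : Measurable (fun ω : ι → FullData p =>
      ∏ i, (if Tc (ω i) = g (c (Xc (ω i))) then (2 : ℝ≥0∞) else 0)) := by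
    rw [hw]; exact measurable_const.indicator (hpi g)
  rw [lintegral_finsetSum _ fun g _ => hwm g, lintegral_finsetSum _ fun g _ => hwm g,
    Finset.mul_sum]
  refine Finset.sum_le_sum fun g _ => ?_
  simp only [hw]
  rw [lintegral_indicator_const (hpi g), lintegral_indicator_const (hpi g),
    Measure.restrict_apply (hpi g), Set.inter_comm, mul_left_comm]
  gcongr
  by_cases h0 : (Q : Measure (FullData p)) (S g) = 0
  · refine (measure_mono Set.inter_subset_right).trans ?_
    simp [Measure.pi_pi, h0]
  · rw [pi_cond_mul _ (hS g) h0 hA]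
    gcongr
    have hp : IsProbabilityMeasure (Q : Measure (FullData p))[|S g] := cond_isProbabilityMeasure h0
    exact hs ⟨(Q : Measure (FullData p))[|S g], hp⟩
      ⟨hQ.of_absolutelyContinuous cond_absolutelyContinuous,
        condIndepFun_of_treatment_ae_eq (Q : Measure (FullData p))[|S g] (hgc g)
          (ae_cond_mem (hS g))⟩

/-- The cell of `x` cut out by the first `k` terms of a dense sequence. -/
def cell (k : ℕ) (x : ℝ) : Fin k → Bool := fun i => decide (x < TopologicalSpace.denseSeq ℝ i)

lemma measurable_cell (k : ℕ) : Measurable (cell k) := by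
  refine measurable_pi_lambda _ fun i => ?_
  refine measurable_to_bool ?_
  have : (fun x => cell k x i) ⁻¹' {true} = Set.Iio (TopologicalSpace.denseSeq ℝ i) := by
    ext; simp [cell]
  exact this ▸ measurableSet_Iio

lemma eventually_cell_ne {x y : ℝ} (h : x ≠ y) : ∀ᶠ k in atTop, cell k x ≠ cell k y := by
  wlog hxy : x < y generalizing x y
  · exact (this h.symm (lt_of_le_of_ne (not_lt.1 hxy) h.symm)).mono fun _ hk => hk.symm
  obtain ⟨_, ⟨m, rfl⟩, h1, h2⟩ := (TopologicalSpace.denseRange_denseSeq ℝ).exists_between hxy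
  filter_upwards [eventually_gt_atTop m] with k hk heq
  have := congrFun heq ⟨m, hk⟩
  simp [cell, h1, h2.le.not_gt] at this

/-- Coordinates with an atomless law are almost surely pairwise distinct under a product measure. -/
lemma ae_injective_pi_s3 {ι Ω : Type*} [Fintype ι] [MeasurableSpace Ω] (μ : Measure Ω)
    [IsProbabilityMeasure μ] {f : Ω → ℝ} (hf : Measurable f) (h : ∀ x, μ.map f {x} = 0) :
    ∀ᵐ ω ∂Measure.pi (fun _ : ι => μ), Function.Injective fun i => f (ω i) := by
  have hne (i j : ι) (hij : i ≠ j) :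
      ∀ᵐ ω ∂Measure.pi (fun _ : ι => μ), f (ω i) ≠ f (ω j) := by
    have hind := (iIndepFun_pi (μ := fun _ : ι => μ) (X := fun _ => f)
      fun _ => hf.aemeasurable).indepFun hij
    have hm (i : ι) : Measurable fun ω : ι → Ω => f (ω i) := hf.comp (measurable_pi_apply i)
    have hmap (i : ι) : (Measure.pi (fun _ : ι => μ)).map (fun ω => f (ω i)) = μ.map f := by
      rw [← (measurePreserving_eval (fun _ : ι => μ) i).map_eq,
        Measure.map_map hf (measurable_pi_apply i)]
      simp only [(measurePreserving_eval (fun _ : ι => μ) i).map_eq]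
      rfl
    rw [indepFun_iff_map_prod_eq_prod_map_map (hm i).aemeasurable (hm j).aemeasurable,
      hmap, hmap] at hind
    have : IsProbabilityMeasure (μ.map f) := Measure.isProbabilityMeasure_map hf.aemeasurable
    have hd : MeasurableSet {q : ℝ × ℝ | q.1 = q.2} :=
      measurableSet_eq_fun measurable_fst measurable_snd
    have hz : ((μ.map f).prod (μ.map f)) {q : ℝ × ℝ | q.1 = q.2} = 0 := by
      rw [Measure.measure_prod_null hd]
      refine ae_of_all _ fun x => ?_
      have : Prod.mk x ⁻¹' {q : ℝ × ℝ | q.1 = q.2} = {x} := by ext; simp [eq_comm]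
      change μ.map f (Prod.mk x ⁻¹' {q : ℝ × ℝ | q.1 = q.2}) = 0
      rw [this, h]
    rw [← hind, Measure.map_apply ((hm i).prodMk (hm j)) hd] at hz
    exact measure_eq_zero_iff_ae_notMem.1 hz
  have hall : ∀ᵐ ω ∂Measure.pi (fun _ : ι => μ), ∀ i j, i ≠ j → f (ω i) ≠ f (ω j) := by
    simp only [ae_all_iff]
    exact hne
  filter_upwards [hall] with ω hω i j hij
  by_contra hne
  exact hω i j hne hij

/-- No free lunch: an event of probability at most `s` under every i.i.d. sample from the
strong-ignorability class has probability at most `s` under every i.i.d. sample from `E`. -/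
lemma pi_le_of_memE {p : ℕ} {ι : Type*} [Fintype ι] [Nonempty ι]
    {Q : ProbabilityMeasure (FullData p)} (hQ : memE Q)
    {A : Set (ι → FullData p)} (hA : MeasurableSet A) {s : ℝ≥0∞} (hs1 : s ≠ ∞)
    (hs : ∀ P : ProbabilityMeasure (FullData p), memPSI P →
      Measure.pi (fun _ : ι => (P : Measure (FullData p))) A ≤ s) :
    Measure.pi (fun _ : ι => (Q : Measure (FullData p))) A ≤ s := by
  classical
  obtain ⟨j, hj⟩ := hQ.1
  set ρ := Measure.pi (fun _ : ι => (Q : Measure (FullData p))) with hρ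
  have hmj : Measurable (fun ω : FullData p => Xc ω j) := by unfold Xc; fun_prop
  let D (k : ℕ) : Set (ι → FullData p) :=
    {ω | Function.Injective fun i => cell k (Xc (ω i) j)}
  have hD (k : ℕ) : MeasurableSet (D k) := by
    have : D k = ⋂ i, ⋂ i', {ω | cell k (Xc (ω i) j) = cell k (Xc (ω i') j) → i = i'} := by
      ext; simp [D, Function.Injective]
    rw [this]
    refine MeasurableSet.iInter fun i => MeasurableSet.iInter fun i' => ?_
    have hm (i : ι) : Measurable fun ω : ι → FullData p => cell k (Xc (ω i) j) :=
      (measurable_cell k).comp (hmj.comp (measurable_pi_apply i))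
    exact (measurableSet_eq_fun (hm i) (hm i')).imp (MeasurableSet.const _)
  have hlim : Tendsto (fun k => ρ (D k)ᶜ) atTop (nhds 0) := by
    rw [← measure_empty (μ := ρ)]
    refine tendsto_measure_of_ae_tendsto_indicator_of_isFiniteMeasure atTop MeasurableSet.empty
      (fun k => (hD k).compl) ?_
    filter_upwards [ae_injective_pi_s3 (ι := ι) (Q : Measure (FullData p)) hmj
      fun x => hj Real.volume_singleton] with ω hω
    have : ∀ᶠ k in atTop, ∀ i i', i ≠ i' → cell k (Xc (ω i) j) ≠ cell k (Xc (ω i') j) := by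
      simp only [eventually_all]
      exact fun i i' hii => eventually_cell_ne (hω.ne hii)
    filter_upwards [this] with k hk
    simp only [Set.mem_empty_iff_false, iff_false, Set.mem_compl_iff, not_not]
    intro i i' h
    by_contra hne
    exact hk i i' hne h
  have hbound (k : ℕ) :
      ρ A ≤ s * (1 + 2 ^ Fintype.card ι * ρ (D k)ᶜ) + ρ (D k)ᶜ := by
    have hcm : Measurable fun x : Fin p → ℝ => cell k (x j) :=
      (measurable_cell k).comp (measurable_pi_apply j)
    have hmain := lintegral_sum_labellings_le hQ hcm hA hs
    rw [← hρ] at hmain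
    set W : (ι → FullData p) → ℝ≥0∞ := fun ω => ∑ g : (Fin k → Bool) → Bool,
      ∏ i, (if Tc (ω i) = g (cell k (Xc (ω i) j)) then (2 : ℝ≥0∞) else 0) with hW
    set M : ℝ≥0∞ := 2 ^ Fintype.card (Fin k → Bool) with hM
    have hM0 : M ≠ 0 := pow_ne_zero _ two_ne_zero
    have hMt : M ≠ ∞ := ENNReal.pow_ne_top ENNReal.ofNat_ne_top
    have hWD {ω} (hω : ω ∈ D k) : W ω = M := sum_prod_ite_eq_of_injective hω _
    have hlow : M * ρ (A ∩ D k) ≤ ∫⁻ ω in A, W ω ∂ρ := by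
      calc M * ρ (A ∩ D k) = ∫⁻ ω in A ∩ D k, M ∂ρ := by simp
        _ = ∫⁻ ω in A ∩ D k, W ω ∂ρ :=
          setLIntegral_congr_fun (hA.inter (hD k)) fun ω hω => (hWD hω.2).symm
        _ ≤ ∫⁻ ω in A, W ω ∂ρ := lintegral_mono_set Set.inter_subset_left
    have hup : ∫⁻ ω, W ω ∂ρ ≤ M * (1 + 2 ^ Fintype.card ι * ρ (D k)ᶜ) := by
      rw [← lintegral_add_compl _ (hD k), mul_add, mul_one, ← mul_assoc]
      gcongr
      · rw [setLIntegral_congr_fun (hD k) fun ω hω => hWD hω]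
        simp only [lintegral_const, Measure.restrict_apply MeasurableSet.univ, Set.univ_inter]
        exact mul_le_of_le_one_right' prob_le_one
      · refine (lintegral_mono fun ω => sum_prod_ite_le _ _).trans ?_
        simp [hM]
    have hAD : ρ (A ∩ D k) ≤ s * (1 + 2 ^ Fintype.card ι * ρ (D k)ᶜ) := by
      rw [← ENNReal.mul_le_mul_iff_right hM0 hMt, mul_left_comm]
      exact hlow.trans (hmain.trans (by gcongr))
    calc ρ A ≤ ρ (A ∩ D k) + ρ (A \ D k) := measure_le_inter_add_sdiff _ _ _
      _ ≤ _ := add_le_add hAD (measure_mono fun _ h => h.2)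
  refine ge_of_tendsto' (x := atTop) ?_ hbound
  have h2 : (2 : ℝ≥0∞) ^ Fintype.card ι ≠ ∞ := ENNReal.pow_ne_top ENNReal.ofNat_ne_top
  have := (ENNReal.Tendsto.const_mul (a := s) (tendsto_const_nhds.add
    (ENNReal.Tendsto.const_mul hlim (Or.inr h2)) : Tendsto (fun k => 1 + _ * ρ (D k)ᶜ) _ (nhds _))
    (Or.inr hs1)).add hlim
  simpa using this

/-- Impute the unobserved potential outcome so that the treatment effect equals `y`. -/
def impute {p : ℕ} (y : ℝ) (ω : FullData p) : FullData p :=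
  (ω.1, if ω.2.2.2 then ω.2.1 else ω.2.2.1 + y, if ω.2.2.2 then ω.2.1 - y else ω.2.2.1, ω.2.2.2)

lemma measurable_impute {p : ℕ} (y : ℝ) : Measurable (impute (p := p) y) := by
  have hs : MeasurableSet {ω : FullData p | ω.2.2.2 = true} :=
    measurableSet_eq_fun (by fun_prop) measurable_const
  exact measurable_fst.prodMk ((Measurable.ite hs (by fun_prop) (by fun_prop)).prodMk
    ((Measurable.ite hs (by fun_prop) (by fun_prop)).prodMk (by fun_prop)))

lemma obs_impute {p : ℕ} (y : ℝ) (ω : FullData p) : obs (impute y ω) = obs ω := by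
  obtain ⟨x, y1, y0, t⟩ := ω
  cases t <;> rfl

lemma Y1c_sub_Y0c_impute {p : ℕ} (y : ℝ) (ω : FullData p) :
    Y1c (impute y ω) - Y0c (impute y ω) = y := by
  obtain ⟨x, y1, y0, t⟩ := ω
  cases t <;> simp [impute, Y1c, Y0c]

lemma measurable_obs {p : ℕ} : Measurable (obs (p := p)) := by
  have hs : MeasurableSet {ω : FullData p | ω.2.2.2 = true} :=
    measurableSet_eq_fun (by fun_prop) measurable_const
  exact measurable_fst.prodMk (Measurable.prodMk (by fun_prop)
    (Measurable.ite hs (by fun_prop) (by fun_prop)))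

lemma memE.map_impute {p : ℕ} {P : ProbabilityMeasure (FullData p)} (hP : memE P) (y : ℝ) :
    memE (P.map (measurable_impute y).aemeasurable) := by
  obtain ⟨⟨j, hj⟩, h1, h0⟩ := hP
  have hm1 : Measurable (Y1c (p := p)) := by unfold Y1c; fun_prop
  have hm0 : Measurable (Y0c (p := p)) := by unfold Y0c; fun_prop
  have hmj : Measurable (fun ω : FullData p => Xc ω j) := by unfold Xc; fun_prop
  have h1' (v : ℝ) : (P : Measure (FullData p)) (Y1c ⁻¹' {v}) = 0 := by
    rw [← Measure.map_apply hm1 (measurableSet_singleton v), h1]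
  have h0' (v : ℝ) : (P : Measure (FullData p)) (Y0c ⁻¹' {v}) = 0 := by
    rw [← Measure.map_apply hm0 (measurableSet_singleton v), h0]
  refine ⟨⟨j, ?_⟩, fun v => ?_, fun v => ?_⟩
  · rw [ProbabilityMeasure.toMeasure_map, Measure.map_map hmj (measurable_impute y)]
    exact hj
  · rw [ProbabilityMeasure.toMeasure_map, Measure.map_map hm1 (measurable_impute y),
      Measure.map_apply (hm1.comp (measurable_impute y)) (measurableSet_singleton v)]
    refine measure_mono_null (t := Y1c ⁻¹' {v} ∪ Y0c ⁻¹' {v - y}) ?_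
      (measure_union_null (h1' _) (h0' _))
    rintro ⟨x, y1, y0, t⟩ h
    cases t <;> simp_all [impute, Y1c, Y0c, eq_sub_iff_add_eq]
  · rw [ProbabilityMeasure.toMeasure_map, Measure.map_map hm0 (measurable_impute y),
      Measure.map_apply (hm0.comp (measurable_impute y)) (measurableSet_singleton v)]
    refine measure_mono_null (t := Y1c ⁻¹' {v + y} ∪ Y0c ⁻¹' {v}) ?_
      (measure_union_null (h1' _) (h0' _))
    rintro ⟨x, y1, y0, t⟩ h
    cases t <;> simp_all [impute, Y1c, Y0c, sub_eq_iff_eq_add]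

lemma measurable_obsData {p : ℕ} (n : ℕ) : Measurable (obsData (p := p) n) :=
  measurable_pi_lambda _ fun _ => measurable_obs.comp (measurable_pi_apply _)

lemma measurable_testX {p : ℕ} (n : ℕ) : Measurable (testX (p := p) n) :=
  measurable_Xc.comp (measurable_pi_apply _)

lemma measurable_testITE {p : ℕ} (n : ℕ) : Measurable (testITE (p := p) n) := by
  unfold testITE Y1c Y0c; fun_prop

instance {p : ℕ} (n : ℕ) (P : ProbabilityMeasure (FullData p)) :
    IsProbabilityMeasure (jointLaw n P) := by
  unfold jointLaw; infer_instance

/-- Finite-sample impossibility: noncoverage of a fixed point is at most the worst-case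
noncoverage of the treatment effect over the strong-ignorability class. -/
lemma noncoverage_le_iSup {p n : ℕ} {C : (Fin n → Obs p) → (Fin p → ℝ) → Set ℝ}
    (hC : MeasurableSet {q : (Fin n → Obs p) × (Fin p → ℝ) × ℝ | q.2.2 ∈ C q.1 q.2.1})
    {P : ProbabilityMeasure (FullData p)} (hP : memE P) (y : ℝ) :
    jointLaw n P {ω | y ∉ C (obsData n ω) (testX n ω)} ≤
      ⨆ P : {P : ProbabilityMeasure (FullData p) // memPSI P},
        jointLaw n P.1 {ω | testITE n ω ∉ C (obsData n ω) (testX n ω)} := by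
  set A := {ω : Fin (n + 1) → FullData p | testITE n ω ∉ C (obsData n ω) (testX n ω)}
  have hA : MeasurableSet A :=
    (hC.preimage ((measurable_obsData n).prodMk
      ((measurable_testX n).prodMk (measurable_testITE n)))).compl
  have hQ := pi_le_of_memE (hP.map_impute y) hA
    (s := ⨆ P : {P : ProbabilityMeasure (FullData p) // memPSI P}, jointLaw n P.1 A)
    (ne_top_of_le_ne_top ENNReal.one_ne_top (iSup_le fun _ => prob_le_one))
    fun P hP => le_iSup (fun P : {P : ProbabilityMeasure (FullData p) // memPSI P} =>
      jointLaw n P.1 A) ⟨P, hP⟩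
  refine le_trans (le_of_eq ?_) hQ
  simp only [ProbabilityMeasure.toMeasure_map]
  have : IsProbabilityMeasure ((P : Measure (FullData p)).map (impute y)) :=
    Measure.isProbabilityMeasure_map (measurable_impute y).aemeasurable
  have hm : Measurable fun (ω : Fin (n + 1) → FullData p) i => impute y (ω i) :=
    measurable_pi_lambda _ fun i => (measurable_impute y).comp (measurable_pi_apply i)
  rw [← Measure.pi_map_pi fun _ => (measurable_impute y).aemeasurable, Measure.map_apply hm hA]
  have : (fun (ω : Fin (n + 1) → FullData p) i => impute y (ω i)) ⁻¹' A =
      {ω | y ∉ C (obsData n ω) (testX n ω)} := by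
    ext ω
    have hobs : obsData n (fun i => impute y (ω i)) = obsData n ω :=
      funext fun i => obs_impute y (ω i.castSucc)
    change testITE n (fun i => impute y (ω i)) ∉ C (obsData n fun i => impute y (ω i)) (testX n ω) ↔
      y ∉ C (obsData n ω) (testX n ω)
    rw [hobs, testITE, Y1c_sub_Y0c_impute]
  rw [this]
  rfl

/-- A random set that asymptotically covers every point with probability bounded away from zero
has expected length tending to infinity. -/
lemma tendsto_lintegral_volume_of_limsup_le {Ω : ℕ → Type*} [∀ n, MeasurableSpace (Ω n)]
    (μ : (n : ℕ) → Measure (Ω n)) [∀ n, IsProbabilityMeasure (μ n)] (C : (n : ℕ) → Ω n → Set ℝ)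
    (hC : ∀ n, MeasurableSet {q : Ω n × ℝ | q.2 ∈ C n q.1}) {a : ℝ≥0∞} (ha : a < 1)
    (h : ∀ y : ℝ, limsup (fun n => μ n {ω | y ∉ C n ω}) atTop ≤ a) :
    Tendsto (fun n => ∫⁻ ω, volume (C n ω) ∂μ n) atTop (nhds ∞) := by
  have hfub (n : ℕ) : ∫⁻ ω, volume (C n ω) ∂μ n = ∫⁻ y, μ n {ω | y ∈ C n ω} := by
    have h1 := Measure.prod_apply (μ := μ n) (ν := (volume : Measure ℝ)) (hC n)
    have h2 := Measure.prod_apply_symm (μ := μ n) (ν := (volume : Measure ℝ)) (hC n)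
    exact h1.symm.trans h2
  have hCy (n : ℕ) (y : ℝ) : MeasurableSet {ω | y ∈ C n ω} := measurable_prodMk_right (hC n)
  have hlim (y : ℝ) : 1 - a ≤ liminf (fun n => μ n {ω | y ∈ C n ω}) atTop := by
    have hcompl (n : ℕ) : μ n {ω | y ∈ C n ω} = 1 - μ n {ω | y ∉ C n ω} := by
      have := prob_compl_eq_one_sub (μ := μ n) (hCy n y).compl
      rwa [compl_compl] at this
    simp_rw [hcompl]
    rw [ENNReal.liminf_const_sub _ _ ENNReal.one_ne_top]
    exact tsub_le_tsub_left (h y) 1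
  have htop : liminf (fun n => ∫⁻ ω, volume (C n ω) ∂μ n) atTop = ∞ := by
    simp_rw [hfub]
    refine top_unique (le_trans ?_ (lintegral_liminf_le fun n =>
      measurable_measure_prodMk_right (hC n)))
    refine le_trans ?_ (lintegral_mono hlim)
    simp [tsub_eq_zero_iff_le, ha]
  exact tendsto_of_le_liminf_of_limsup_le htop.ge le_top

/-- If a sequence of prediction sets `{Ĉ_{n,α}}` satisfies the asymptotic
distribution-free validity `limsup_{n→∞} sup_{P ∈ P_SI} P_P(Δ ∉ Ĉ_{n,α}(X)) ≤ α` for some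
`α ∈ (0,1)`, then for every `P ∈ P_SI` and every `y ∈ ℝ`,
`limsup_{n→∞} P_P(y ∉ Ĉ_{n,α}(X)) ≤ α`, and hence
`lim_{n→∞} E_P[length(Ĉ_{n,α}(X))] = ∞`. -/
theorem asymptotic_impossibility {p : ℕ}
    (C : (n : ℕ) → (Fin n → Obs p) → (Fin p → ℝ) → Set ℝ)
    (hC : ∀ n, MeasurableSet
      {q : (Fin n → Obs p) × (Fin p → ℝ) × ℝ | q.2.2 ∈ C n q.1 q.2.1})
    (α : ℝ) (hα : α ∈ Set.Ioo (0 : ℝ) 1)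
    (hcov : Filter.limsup
        (fun n => ⨆ P : {P : ProbabilityMeasure (FullData p) // memPSI P},
          jointLaw n P.1 {ω | testITE n ω ∉ C n (obsData n ω) (testX n ω)})
        Filter.atTop ≤ ENNReal.ofReal α) :
    ∀ P : ProbabilityMeasure (FullData p), memPSI P →
      (∀ y : ℝ,
        Filter.limsup
          (fun n => jointLaw n P {ω | y ∉ C n (obsData n ω) (testX n ω)})
          Filter.atTop ≤ ENNReal.ofReal α) ∧
      Filter.Tendsto
        (fun n => ∫⁻ ω, volume (C n (obsData n ω) (testX n ω)) ∂(jointLaw n P))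
        Filter.atTop (nhds ⊤) := by
  intro P hP
  have hy (y : ℝ) : Filter.limsup
      (fun n => jointLaw n P {ω | y ∉ C n (obsData n ω) (testX n ω)})
      Filter.atTop ≤ ENNReal.ofReal α :=
    (Filter.limsup_le_limsup (Eventually.of_forall fun n =>
      noncoverage_le_iSup (hC n) hP.1 y)).trans hcov
  refine ⟨hy, tendsto_lintegral_volume_of_limsup_le (fun n => jointLaw n P)
    (fun n ω => C n (obsData n ω) (testX n ω)) (fun n => ?_)
    (ENNReal.ofReal_lt_one.2 hα.2) hy⟩
  exact (hC n).preimage (((measurable_obsData n).comp measurable_fst).prodMk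
    (((measurable_testX n).comp measurable_fst).prodMk measurable_snd))

end
end
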